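/- arXiv:2410.13347 — 2 statements merged into one kernel-verified Lean document; each statement's English description precedes it below -/
import Mathlib

section
/- (Abstract fixed-metric form of Proposition 1.1, local Lipschitz continuity.) Assume the pair (a,e) satisfies the Poincaré hypothesis. Let k ≥ 1 be an integer and let β₀ be a continuous symmetric bilinear form on H with β₀(φ,φ) ≥ 0 for all φ, β₀(e,e) > 0 and λ_k(β₀) < +∞. Then there exist ε₀ > 0 and M ≥ 0 such that for all continuous symmetric bilinear forms β₁, β₂ on H with βᵢ(φ,φ) ≥ 0 for all φ, βᵢ(e,e) > 0, ‖βᵢ − β₀‖ ≤ ε₀ and λ_k(βᵢ) ≤ λ_k(β₀) + 1 (i = 1,2), one has |λ_k(β₁) − λ_k(β₂)| ≤ M‖β₁ − β₂‖. -/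
open scoped ENNReal

/-- The quotient A/B with the convention `+∞` if `B = 0 < A` and `0` if both vanish. -/
noncomputable def rayleighQuot (A B : ℝ) : ℝ≥0∞ :=
  if B = 0 then (if A = 0 then 0 else ⊤) else ENNReal.ofReal (A / B)

/-- The `k`-th generalized eigenvalue `λ_k(β)`: the infimum over all `k`-dimensional
subspaces `V` of `{φ : β(e,φ) = 0}` of `sup_{φ ∈ V, φ ≠ 0} a(φ,φ)/β(φ,φ)`. -/
noncomputable def genEigenvalue {H : Type*} [NormedAddCommGroup H] [InnerProductSpace ℝ H]
    (a : H →L[ℝ] H →L[ℝ] ℝ) (e : H) (k : ℕ) (β : H →L[ℝ] H →L[ℝ] ℝ) : ℝ≥0∞ :=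
  ⨅ (V : Submodule ℝ H) (_ : Module.finrank ℝ V = k ∧ ∀ φ ∈ V, β e φ = 0),
    ⨆ (φ : H) (_ : φ ∈ V ∧ φ ≠ 0), rayleighQuot (a φ φ) (β φ φ)

/-- The Poincaré hypothesis for the pair `(a, e)`. -/
def PoincareHyp {H : Type*} [NormedAddCommGroup H] [InnerProductSpace ℝ H]
    (a : H →L[ℝ] H →L[ℝ] ℝ) (e : H) : Prop :=
  ∃ C₀ : ℝ, 0 ≤ C₀ ∧ ∀ ℓ : H →L[ℝ] ℝ, ℓ e = 1 → ∀ φ : H, ℓ φ = 0 →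
    ‖φ‖ ^ 2 ≤ (C₀ * ‖ℓ‖ ^ 2 + 1) * a φ φ

lemma rayleighQuot_le_ofReal_iff {A B L : ℝ} (hA : 0 ≤ A) (hB : 0 ≤ B) (hL : 0 ≤ L) :
    rayleighQuot A B ≤ ENNReal.ofReal L ↔ A ≤ L * B := by
  unfold rayleighQuot
  split_ifs with h1 h2
  · simp [h1, h2]
  · simp only [top_le_iff, ENNReal.ofReal_ne_top, h1, mul_zero, false_iff, not_le]
    exact lt_of_le_of_ne hA (Ne.symm h2)
  · rw [ENNReal.ofReal_le_ofReal_iff hL, div_le_iff₀ (lt_of_le_of_ne hB (Ne.symm h1))]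

section

variable {H : Type*} [NormedAddCommGroup H] [InnerProductSpace ℝ H]

lemma abs_sub_apply_le_norm_sub (β₁ β₂ : H →L[ℝ] H →L[ℝ] ℝ) (φ ψ : H) :
    |β₁ φ ψ - β₂ φ ψ| ≤ ‖β₁ - β₂‖ * ‖φ‖ * ‖ψ‖ := by
  simpa using (β₁ - β₂).le_opNorm₂ φ ψ

/-- A `β₁`-admissible subspace with Rayleigh quotients at most `L` is projected along `e` onto a
`β₂`-admissible one, at a controlled cost. -/
lemma genEigenvalue_le_of_lt (a : H →L[ℝ] H →L[ℝ] ℝ)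
    (ha_symm : ∀ φ ψ : H, a φ ψ = a ψ φ) (ha_nonneg : ∀ φ : H, 0 ≤ a φ φ)
    (e : H) (he : ∀ ψ : H, a e ψ = 0) (k : ℕ) (β₁ β₂ : H →L[ℝ] H →L[ℝ] ℝ)
    (h₁ : ∀ φ : H, 0 ≤ β₁ φ φ) (h₁e : 0 < β₁ e e)
    (hs₂ : ∀ φ ψ : H, β₂ φ ψ = β₂ ψ φ) (h₂ : ∀ φ : H, 0 ≤ β₂ φ φ) (h₂e : 0 < β₂ e e)
    {C K L : ℝ} (hC : 0 ≤ C) (hK : 0 ≤ K) (hL : 0 ≤ L)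
    (hP : ∀ φ : H, β₁ e φ = 0 → ‖φ‖ ^ 2 ≤ C * a φ φ)
    (hKe : ‖β₁ - β₂‖ * ‖e‖ ^ 2 ≤ (K - 1) * β₂ e e)
    (hx : L * K * C * ‖β₁ - β₂‖ ≤ 1 / 2)
    (hlt : genEigenvalue a e k β₁ < ENNReal.ofReal L) :
    genEigenvalue a e k β₂ ≤ ENNReal.ofReal (L * (1 + 2 * (L * K * C * ‖β₁ - β₂‖))) := by
  simp only [genEigenvalue, iInf_lt_iff] at hlt
  obtain ⟨V, ⟨hVk, hVe⟩, hV⟩ := hlt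
  have hquot : ∀ φ ∈ V, a φ φ ≤ L * β₁ φ φ := by
    intro φ hφ
    rcases eq_or_ne φ 0 with rfl | h0
    · simp
    rw [← rayleighQuot_le_ofReal_iff (ha_nonneg φ) (h₁ φ) hL]
    exact le_trans (le_iSup₂ (f := fun (φ : H) (_ : φ ∈ V ∧ φ ≠ 0) =>
      rayleighQuot (a φ φ) (β₁ φ φ)) φ ⟨hφ, h0⟩) hV.le
  set η := ‖β₁ - β₂‖ with hη
  have hη0 : 0 ≤ η := norm_nonneg (β₁ - β₂)
  let T : V →ₗ[ℝ] H :=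
    V.subtype - ((β₂ e e)⁻¹ • ((β₂ e).toLinearMap ∘ₗ V.subtype)).smulRight e
  have hT : ∀ v : V, T v = (v : H) - ((β₂ e e)⁻¹ * β₂ e v) • e := fun v => by simp [T]
  have hinj : Function.Injective T := by
    rw [← LinearMap.ker_eq_bot, LinearMap.ker_eq_bot']
    intro v hv
    rw [hT, sub_eq_zero] at hv
    have h := hVe v v.2
    rw [hv, map_smul, smul_eq_mul, mul_eq_zero] at h
    rcases h with h | h
    · rw [h, zero_smul] at hv
      exact Subtype.ext hv
    · exact absurd h h₁e.ne'
  refine iInf₂_le_of_le (LinearMap.range T) ⟨?_, ?_⟩ (iSup₂_le ?_)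
  · rw [LinearMap.finrank_range_of_inj hinj, hVk]
  · rintro _ ⟨v, rfl⟩
    rw [hT, map_sub, map_smul, smul_eq_mul]
    field_simp
    ring
  · rintro _ ⟨⟨v, rfl⟩, -⟩
    rw [rayleighQuot_le_ofReal_iff (ha_nonneg _) (h₂ _) (by positivity), hT]
    obtain ⟨φ, hφ⟩ := v
    simp only
    have haw : a (φ - ((β₂ e e)⁻¹ * β₂ e φ) • e) (φ - ((β₂ e e)⁻¹ * β₂ e φ) • e) = a φ φ := by
      simp [he, ha_symm φ e]
    have hbw : β₂ (φ - ((β₂ e e)⁻¹ * β₂ e φ) • e) (φ - ((β₂ e e)⁻¹ * β₂ e φ) • e)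
        = β₂ φ φ - (β₂ e φ) ^ 2 / β₂ e e := by
      simp only [map_sub, map_smul, ContinuousLinearMap.sub_apply,
        ContinuousLinearMap.smul_apply, smul_eq_mul, hs₂ φ e]
      field_simp
      ring
    rw [haw, hbw]
    have hq := hquot φ hφ
    have hp := hP φ (hVe φ hφ)
    have hA := ha_nonneg φ
    have hd := (abs_le.1 (abs_sub_apply_le_norm_sub β₁ β₂ φ φ)).2
    have hde := abs_sub_apply_le_norm_sub β₁ β₂ e φ
    rw [hVe φ hφ, zero_sub, abs_neg, ← hη] at hde
    rw [← hη] at hd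
    have hsq : (β₂ e φ) ^ 2 / β₂ e e ≤ (K - 1) * η * ‖φ‖ ^ 2 := by
      rw [div_le_iff₀ h₂e, ← sq_abs]
      calc |β₂ e φ| ^ 2 ≤ (η * ‖e‖ * ‖φ‖) ^ 2 := by gcongr
        _ = (η * ‖e‖ ^ 2) * (η * ‖φ‖ ^ 2) := by ring
        _ ≤ ((K - 1) * β₂ e e) * (η * ‖φ‖ ^ 2) := by gcongr
        _ = _ := by ring
    have hlow : β₁ φ φ - K * η * (C * a φ φ) ≤ β₂ φ φ - (β₂ e φ) ^ 2 / β₂ e e := by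
      have : K * η * ‖φ‖ ^ 2 ≤ K * η * (C * a φ φ) := by gcongr
      linarith
    set x := L * K * C * η with hxdef
    have hx0 : 0 ≤ x := by positivity
    have hmul : (1 - x) * a φ φ ≤ L * (β₂ φ φ - (β₂ e φ) ^ 2 / β₂ e e) := by
      refine le_trans ?_ (mul_le_mul_of_nonneg_left hlow hL)
      rw [hxdef]
      linarith
    calc a φ φ ≤ (1 + 2 * x) * ((1 - x) * a φ φ) := by
          nlinarith [mul_nonneg (mul_nonneg hx0 (sub_nonneg.2 hx)) hA]
      _ ≤ (1 + 2 * x) * (L * (β₂ φ φ - (β₂ e φ) ^ 2 / β₂ e e)) := by gcongr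
      _ = _ := by ring

end

/-- Abstract fixed-metric form of Proposition 1.1, local Lipschitz continuity:
around a form `β₀` with `λ_k(β₀) < ∞`, the map `β ↦ λ_k(β)` is Lipschitz on the set
of nearby forms where `λ_k ≤ λ_k(β₀) + 1`. -/
theorem stmt2 {H : Type*} [NormedAddCommGroup H] [InnerProductSpace ℝ H] [CompleteSpace H]
    (a : H →L[ℝ] H →L[ℝ] ℝ)
    (ha_symm : ∀ φ ψ : H, a φ ψ = a ψ φ)
    (ha_nonneg : ∀ φ : H, 0 ≤ a φ φ)
    (ha_le : ∀ φ : H, a φ φ ≤ ‖φ‖ ^ 2)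
    (e : H) (he : ∀ ψ : H, a e ψ = 0)
    (hPoincare : PoincareHyp a e)
    (k : ℕ) (hk : 1 ≤ k)
    (β₀ : H →L[ℝ] H →L[ℝ] ℝ)
    (hβ₀_symm : ∀ φ ψ : H, β₀ φ ψ = β₀ ψ φ)
    (hβ₀_nonneg : ∀ φ : H, 0 ≤ β₀ φ φ)
    (hβ₀e : 0 < β₀ e e)
    (hβ₀fin : genEigenvalue a e k β₀ ≠ ⊤) :
    ∃ ε₀ > (0:ℝ), ∃ M : ℝ, 0 ≤ M ∧
      ∀ β₁ β₂ : H →L[ℝ] H →L[ℝ] ℝ,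
        (∀ φ ψ : H, β₁ φ ψ = β₁ ψ φ) → (∀ φ : H, 0 ≤ β₁ φ φ) → 0 < β₁ e e →
        (∀ φ ψ : H, β₂ φ ψ = β₂ ψ φ) → (∀ φ : H, 0 ≤ β₂ φ φ) → 0 < β₂ e e →
        ‖β₁ - β₀‖ ≤ ε₀ → ‖β₂ - β₀‖ ≤ ε₀ →
        genEigenvalue a e k β₁ ≤ genEigenvalue a e k β₀ + 1 →
        genEigenvalue a e k β₂ ≤ genEigenvalue a e k β₀ + 1 →
        |(genEigenvalue a e k β₁).toReal - (genEigenvalue a e k β₂).toReal|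
          ≤ M * ‖β₁ - β₂‖ := by
  obtain ⟨C₀, hC₀, hPoin⟩ := hPoincare
  set b := β₀ e e with hb
  set Λ := (genEigenvalue a e k β₀).toReal + 1 with hΛ
  have hΛ0 : 0 < Λ := by positivity
  set B := (‖β₀‖ + 1) * ‖e‖ / (b / 2) with hB
  have hB0 : 0 ≤ B := by positivity
  set C := C₀ * B ^ 2 + 1 with hC
  have hC0 : 0 < C := by positivity
  set K := 1 + 4 * ‖e‖ ^ 2 / b with hK
  have hK0 : 0 < K := by positivity
  set ε := min 1 (min (b / (2 * (‖e‖ ^ 2 + 1))) (1 / (4 * K * C * (Λ + 1)))) with hε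
  have hε0 : 0 < ε := by positivity
  have hε1 : ε ≤ 1 := min_le_left _ _
  have hε2 : ε * ‖e‖ ^ 2 ≤ b / 2 := by
    have h : ε ≤ b / (2 * (‖e‖ ^ 2 + 1)) := (min_le_right _ _).trans (min_le_left _ _)
    rw [le_div_iff₀ (by positivity)] at h
    linarith
  have hε3 : ε * (4 * K * C * (Λ + 1)) ≤ 1 := by
    have h : ε ≤ 1 / (4 * K * C * (Λ + 1)) := (min_le_right _ _).trans (min_le_right _ _)
    rwa [le_div_iff₀ (by positivity)] at h
  have hbelow : ∀ β : H →L[ℝ] H →L[ℝ] ℝ, ‖β - β₀‖ ≤ ε → b / 2 ≤ β e e := by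
    intro β hβ
    have h := (abs_le.1 (abs_sub_apply_le_norm_sub β β₀ e e)).1
    have h' : ‖β - β₀‖ * ‖e‖ * ‖e‖ ≤ ε * ‖e‖ * ‖e‖ := by gcongr
    linarith
  have hpoin : ∀ β : H →L[ℝ] H →L[ℝ] ℝ, ‖β - β₀‖ ≤ ε →
      ∀ φ : H, β e φ = 0 → ‖φ‖ ^ 2 ≤ C * a φ φ := by
    intro β hβ φ hφ
    have hβe := hbelow β hβ
    have hβe0 : 0 < β e e := by linarith
    have hnorm : ‖β‖ ≤ ‖β₀‖ + 1 := by
      have := norm_le_norm_add_norm_sub' β β₀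
      linarith
    have hℓ : ‖(β e e)⁻¹ • β e‖ ≤ B := by
      rw [norm_smul, norm_inv, Real.norm_of_nonneg hβe0.le, hB, inv_mul_eq_div]
      gcongr
      exact (β.le_opNorm e).trans (by gcongr)
    refine (hPoin ((β e e)⁻¹ • β e) ?_ φ ?_).trans ?_
    · simp [hβe0.ne']
    · simp [hφ]
    · have := ha_nonneg φ
      rw [hC]
      gcongr
  have hfin : ∀ β : H →L[ℝ] H →L[ℝ] ℝ,
      genEigenvalue a e k β ≤ genEigenvalue a e k β₀ + 1 →
      genEigenvalue a e k β ≠ ⊤ ∧ (genEigenvalue a e k β).toReal ≤ Λ := by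
    intro β hβ
    have htop : genEigenvalue a e k β₀ + 1 ≠ ⊤ := by simp [hβ₀fin]
    refine ⟨ne_top_of_le_ne_top htop hβ, ?_⟩
    have h := ENNReal.toReal_mono htop hβ
    rwa [ENNReal.toReal_add hβ₀fin ENNReal.one_ne_top, ENNReal.toReal_one] at h
  set M := 2 * K * C * (Λ + 1) ^ 2 with hM
  have hM0 : 0 ≤ M := by positivity
  have key : ∀ β₁ β₂ : H →L[ℝ] H →L[ℝ] ℝ,
      (∀ φ : H, 0 ≤ β₁ φ φ) → (∀ φ ψ : H, β₂ φ ψ = β₂ ψ φ) → (∀ φ : H, 0 ≤ β₂ φ φ) →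
      ‖β₁ - β₀‖ ≤ ε → ‖β₂ - β₀‖ ≤ ε →
      genEigenvalue a e k β₁ ≤ genEigenvalue a e k β₀ + 1 →
      (genEigenvalue a e k β₂).toReal ≤ (genEigenvalue a e k β₁).toReal + M * ‖β₁ - β₂‖ := by
    intro β₁ β₂ h₁ hs₂ h₂ hn₁ hn₂ hle
    obtain ⟨hf₁, hΛ₁⟩ := hfin β₁ hle
    have h₁e := hbelow β₁ hn₁
    have h₂e := hbelow β₂ hn₂
    have hη : ‖β₁ - β₂‖ ≤ 2 * ε := by
      have := norm_sub_le_norm_sub_add_norm_sub β₁ β₀ β₂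
      rw [norm_sub_rev β₀ β₂] at this
      linarith
    refine le_of_forall_pos_le_add fun δ hδ => ?_
    set L := (genEigenvalue a e k β₁).toReal + min δ 1 with hL
    have hδ' : 0 < min δ 1 := by positivity
    have hL0 : 0 < L := by positivity
    have hLΛ : L ≤ Λ + 1 := by
      have := min_le_right δ 1
      linarith
    have hlt : genEigenvalue a e k β₁ < ENNReal.ofReal L := by
      rw [ENNReal.lt_ofReal_iff_toReal_lt hf₁]
      linarith
    have hx : L * K * C * ‖β₁ - β₂‖ ≤ 1 / 2 := by
      calc L * K * C * ‖β₁ - β₂‖ ≤ (Λ + 1) * K * C * (2 * ε) := by gcongr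
        _ ≤ 1 / 2 := by linarith
    have hKe : ‖β₁ - β₂‖ * ‖e‖ ^ 2 ≤ (K - 1) * β₂ e e := by
      calc ‖β₁ - β₂‖ * ‖e‖ ^ 2 ≤ 2 * 1 * ‖e‖ ^ 2 := by
            gcongr
            linarith
        _ = (K - 1) * (b / 2) := by
            rw [hK]
            field_simp
            ring
        _ ≤ (K - 1) * β₂ e e := by
            have : 0 ≤ K - 1 := by
              rw [hK, add_sub_cancel_left]
              positivity
            gcongr
    have hmain := genEigenvalue_le_of_lt a ha_symm ha_nonneg e he k β₁ β₂ h₁ (by linarith) hs₂ h₂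
      (by linarith) hC0.le hK0.le hL0.le (hpoin β₁ hn₁) hKe hx hlt
    have hreal := ENNReal.toReal_le_of_le_ofReal (by positivity) hmain
    calc (genEigenvalue a e k β₂).toReal
        ≤ L * (1 + 2 * (L * K * C * ‖β₁ - β₂‖)) := hreal
      _ = L + 2 * K * C * L ^ 2 * ‖β₁ - β₂‖ := by ring
      _ ≤ L + 2 * K * C * (Λ + 1) ^ 2 * ‖β₁ - β₂‖ := by gcongr
      _ ≤ _ := by
        have := min_le_left δ 1
        rw [hM]
        linarith
  refine ⟨ε, hε0, M, hM0, ?_⟩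
  intro β₁ β₂ hs₁ h₁ _ hs₂ h₂ _ hn₁ hn₂ hle₁ hle₂
  have h12 := key β₁ β₂ h₁ hs₂ h₂ hn₁ hn₂ hle₁
  have h21 := key β₂ β₁ h₂ hs₁ h₁ hn₂ hn₁ hle₂
  rw [norm_sub_rev β₂ β₁] at h21
  rw [abs_le]
  constructor <;> linarith
end

section
/- (Energy of the cone extension and Wirtinger bound, from Step 3 of the proof of Proposition 3.2.) Let g : ℝ → ℝ be continuously differentiable and 2π-periodic, and define u on the closed unit disk of ℂ by u(0) = 0 and u(r e^{iθ}) = r g(θ) for 0 < r ≤ 1. Then ∫_{0<|z|<1} ‖∇u(z)‖² dz = (1/2) ( ∫₀^{2π} g(θ)² dθ + ∫₀^{2π} g′(θ)² dθ ). Moreover, if ∫₀^{2π} g(θ) dθ = 0, then ∫_{0<|z|<1} ‖∇u(z)‖² dz ≤ ∫₀^{2π} g′(θ)² dθ. -/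
open MeasureTheory Complex

/-- The real linear functional `v ↦ Re (c v)` on `ℂ` has norm `‖c‖`. -/
lemma norm_reCLM_comp_smul_id (c : ℂ) :
    ‖reCLM.comp (c • (1 : ℂ →L[ℝ] ℂ))‖ = ‖c‖ := by
  apply le_antisymm
  · refine ContinuousLinearMap.opNorm_le_bound _ (norm_nonneg c) fun v => ?_
    simpa using abs_re_le_norm (c * v)
  · rcases eq_or_ne c 0 with rfl | hc
    · simp
    · have h := (reCLM.comp (c • (1 : ℂ →L[ℝ] ℂ))).le_opNorm (starRingEnd ℂ c)
      have h2 : reCLM.comp (c • (1 : ℂ →L[ℝ] ℂ)) (starRingEnd ℂ c) = ‖c‖ * ‖c‖ := by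
        simp [← normSq_apply, normSq_eq_norm_sq, pow_two]
      rw [h2, RCLike.norm_conj, Real.norm_of_nonneg (by positivity)] at h
      exact le_of_mul_le_mul_right h (norm_pos_iff.mpr hc)

/-- Squared gradient, away from the negative real axis, of a function that is homogeneous of
degree one on the unit disk. -/
lemma norm_fderiv_cone_sq {g : ℝ → ℝ} (hg : Differentiable ℝ g) {u : ℂ → ℝ}
    (hu : ∀ r θ : ℝ, 0 < r → r ≤ 1 → u (r * exp (θ * I)) = r * g θ)
    {z : ℂ} (hz : z ∈ slitPlane) (hz1 : ‖z‖ < 1) :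
    ‖fderiv ℝ u z‖ ^ 2 = g (arg z) ^ 2 + deriv g (arg z) ^ 2 := by
  have hz0 : z ≠ 0 := slitPlane_ne_zero hz
  have hlog : HasFDerivAt log (z⁻¹ • (1 : ℂ →L[ℝ] ℂ)) z :=
    (hasStrictFDerivAt_log_real hz).hasFDerivAt
  have hre := (reCLM.hasFDerivAt (x := log z)).comp z hlog
  have him := (imCLM.hasFDerivAt (x := log z)).comp z hlog
  have hexp := hre.exp
  have hgd := (hg (log z).im).hasDerivAt.comp_hasFDerivAt z him
  have hmul := hexp.mul hgd
  have heq : u =ᶠ[nhds z] fun w => Real.exp ((log w).re) * g ((log w).im) := by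
    have h1 : ∀ᶠ w : ℂ in nhds z, ‖w‖ < 1 := continuous_norm.continuousAt.eventually_lt_const hz1
    filter_upwards [h1, isOpen_ne.mem_nhds hz0] with w hw hw0
    have hpos : 0 < ‖w‖ := norm_pos_iff.mpr hw0
    have := hu ‖w‖ (arg w) hpos hw.le
    rw [norm_mul_exp_arg_mul_I] at this
    rw [this, log_re, log_im, Real.exp_log hpos]
  have hfd := HasFDerivAt.congr_of_eventuallyEq hmul heq
  set c : ℂ := ‖z‖ * (g (arg z) - deriv g (arg z) * I) * z⁻¹ with hc
  have hL : fderiv ℝ u z = reCLM.comp (c • (1 : ℂ →L[ℝ] ℂ)) := by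
    rw [hfd.fderiv]
    ext v
    all_goals
      simp [log_re, log_im, Real.exp_log (norm_pos_iff.mpr hz0), hc]
      ring
  have hcn : ‖c‖ = ‖(g (arg z) - deriv g (arg z) * I : ℂ)‖ := by
    have := norm_ne_zero_iff.mpr hz0
    rw [hc, norm_mul, norm_mul, norm_inv, norm_real, norm_norm]
    field_simp
  rw [hL, norm_reCLM_comp_smul_id, hcn, ← normSq_eq_norm_sq, normSq_apply]
  simp
  ring

/-- Integration in polar coordinates of a function of the angle over the punctured unit disk. -/
lemma integral_punctured_disk_of_arg {f : ℂ → ℝ} {h : ℝ → ℝ}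
    (hper : Function.Periodic h (2 * Real.pi))
    (hf : ∀ z ∈ slitPlane, ‖z‖ < 1 → f z = h (arg z)) :
    ∫ z in {z : ℂ | 0 < ‖z‖ ∧ ‖z‖ < 1}, f z
      = (1 / 2) * ∫ θ in (0:ℝ)..(2 * Real.pi), h θ := by
  have hS : MeasurableSet {z : ℂ | 0 < ‖z‖ ∧ ‖z‖ < 1} :=
    (measurableSet_lt measurable_const measurable_norm).inter
      (measurableSet_lt measurable_norm measurable_const)
  have htgt : MeasurableSet polarCoord.target := polarCoord.open_target.measurableSet
  have hR : MeasurableSet (Set.Ioo (0:ℝ) 1 ×ˢ Set.Ioo (-Real.pi) Real.pi) :=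
    measurableSet_Ioo.prod measurableSet_Ioo
  rw [← integral_indicator hS, ← Complex.integral_comp_polarCoord_symm,
    ← integral_indicator htgt]
  have key : (polarCoord.target.indicator fun p : ℝ × ℝ =>
        p.1 • ({z : ℂ | 0 < ‖z‖ ∧ ‖z‖ < 1}.indicator f) (Complex.polarCoord.symm p))
      = (Set.Ioo (0:ℝ) 1 ×ˢ Set.Ioo (-Real.pi) Real.pi).indicator fun p => p.1 * h p.2 := by
    ext p
    by_cases hp : p ∈ polarCoord.target
    · rw [Set.indicator_of_mem hp]
      have hp' : 0 < p.1 ∧ -Real.pi < p.2 ∧ p.2 < Real.pi := by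
        simpa [polarCoord_target] using hp
      have hn : ‖Complex.polarCoord.symm p‖ = p.1 := by
        rw [norm_polarCoord_symm, abs_of_pos hp'.1]
      by_cases h1 : p.1 < 1
      · have hmap : Complex.polarCoord (Complex.polarCoord.symm p) = p :=
          Complex.polarCoord.right_inv hp
        have hslit : Complex.polarCoord.symm p ∈ slitPlane :=
          Complex.polarCoord.map_target hp
        have harg : arg (Complex.polarCoord.symm p) = p.2 := by
          rw [Complex.polarCoord_apply] at hmap
          exact congrArg Prod.snd hmap
        have hmem : p ∈ Set.Ioo (0:ℝ) 1 ×ˢ Set.Ioo (-Real.pi) Real.pi :=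
          ⟨⟨hp'.1, h1⟩, hp'.2⟩
        rw [Set.indicator_of_mem (by rw [Set.mem_ofPred_eq, hn]; exact ⟨hp'.1, h1⟩),
          Set.indicator_of_mem hmem,
          hf _ hslit (by rwa [hn]), harg, smul_eq_mul]
      · rw [Set.indicator_of_notMem (by rw [Set.mem_ofPred_eq, hn]; exact fun H => h1 H.2),
          Set.indicator_of_notMem (fun H => h1 H.1.2), smul_zero]
    · rw [Set.indicator_of_notMem hp, Set.indicator_of_notMem]
      rintro ⟨h1, h2⟩
      exact hp (by rw [polarCoord_target]; exact ⟨h1.1, h2⟩)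
  rw [key, integral_indicator hR, Measure.volume_eq_prod,
    setIntegral_prod_mul (fun r : ℝ => r) h]
  congr 1
  · rw [← integral_Ioc_eq_integral_Ioo, ← intervalIntegral.integral_of_le zero_le_one,
      integral_id]
    norm_num
  · rw [← integral_Ioc_eq_integral_Ioo,
      ← intervalIntegral.integral_of_le (by linarith [Real.pi_pos])]
    have := hper.intervalIntegral_add_eq (-Real.pi) 0
    rw [zero_add] at this
    rw [← this]
    congr 1
    ring

/-- **Wirtinger's inequality** for periodic functions of mean zero. -/
lemma integral_sq_le_integral_deriv_sq {g : ℝ → ℝ} (hg : ContDiff ℝ 1 g)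
    (hper : Function.Periodic g (2 * Real.pi))
    (hmean : ∫ θ in (0:ℝ)..(2 * Real.pi), g θ = 0) :
    ∫ θ in (0:ℝ)..(2 * Real.pi), g θ ^ 2 ≤ ∫ θ in (0:ℝ)..(2 * Real.pi), deriv g θ ^ 2 := by
  have hpi : (0:ℝ) < 2 * Real.pi := Real.two_pi_pos
  have hg' : Continuous (deriv g) := hg.continuous_deriv le_rfl
  have hL2 {k : ℝ → ℝ} (hk : Continuous k) :
      MemLp (fun x => (k x : ℂ)) 2 (volume.restrict (Set.Ioc 0 (2 * Real.pi))) := by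
    have hk' : Continuous fun x => (k x : ℂ) := by fun_prop
    refine (memLp_two_iff_integrable_sq_norm hk'.aestronglyMeasurable).mpr ?_
    exact ((hk'.norm.pow 2).continuousOn.integrableOn_Icc).mono_set Set.Ioc_subset_Icc_self
  have hle (n : ℤ) : ‖fourierCoeffOn hpi (fun x => (g x : ℂ)) n‖ ^ 2
      ≤ ‖fourierCoeffOn hpi (fun x => ((deriv g x : ℝ) : ℂ)) n‖ ^ 2 := by
    rcases eq_or_ne n 0 with rfl | hn
    · have : fourierCoeffOn hpi (fun x => (g x : ℂ)) 0 = 0 := by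
        rw [fourierCoeffOn_eq_integral]
        simp [intervalIntegral.integral_ofReal, hmean]
      rw [this]
      simp
    · have h := fourierCoeffOn_of_hasDerivAt hpi (f := fun x => (g x : ℂ))
        (f' := fun x => ((deriv g x : ℝ) : ℂ)) hn
        (fun x _ => ((hg.differentiable one_ne_zero) x).hasDerivAt.ofReal_comp)
        (Continuous.intervalIntegrable (by fun_prop) _ _)
      have hend : g (2 * Real.pi) = g 0 := by simpa using hper 0
      have h1 : (1:ℝ) ≤ |(n:ℝ)| := by exact_mod_cast Int.one_le_abs hn
      have hnorm : ‖fourierCoeffOn hpi (fun x => (g x : ℂ)) n‖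
          = ‖fourierCoeffOn hpi (fun x => ((deriv g x : ℝ) : ℂ)) n‖ / |(n:ℝ)| := by
        rw [h, hend, sub_self, mul_zero, zero_sub]
        simp [abs_of_pos Real.pi_pos]
        field_simp
      rw [hnorm]
      gcongr
      exact div_le_self (norm_nonneg _) h1
  have hsum := hasSum_le hle (hasSum_sq_fourierCoeffOn hpi (hL2 hg.continuous))
    (hasSum_sq_fourierCoeffOn hpi (hL2 hg'))
  simp only [norm_real, Real.norm_eq_abs, sq_abs, smul_eq_mul, sub_zero] at hsum
  exact le_of_mul_le_mul_left hsum (inv_pos.mpr hpi)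

/-- Energy of the cone extension and Wirtinger bound (Step 3 of the proof of
Proposition 3.2): if `g` is C¹ and 2π-periodic and `u(re^{iθ}) = r g(θ)`, `u(0) = 0`,
then `∫_{0<|z|<1} ‖∇u‖² = (1/2)(∫₀^{2π} g² + ∫₀^{2π} g′²)`; moreover if `g` has zero
mean then `∫_{0<|z|<1} ‖∇u‖² ≤ ∫₀^{2π} g′²`. -/
theorem stmt16 (g : ℝ → ℝ) (hg : ContDiff ℝ 1 g)
    (hper : ∀ θ : ℝ, g (θ + 2 * Real.pi) = g θ)
    (u : ℂ → ℝ) (hu0 : u 0 = 0)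
    (hu : ∀ r θ : ℝ, 0 < r → r ≤ 1 → u (r * exp (θ * I)) = r * g θ) :
    (∫ z in {z : ℂ | 0 < ‖z‖ ∧ ‖z‖ < 1}, ‖fderiv ℝ u z‖ ^ 2)
      = (1 / 2) * ((∫ θ in (0:ℝ)..(2 * Real.pi), (g θ) ^ 2)
          + ∫ θ in (0:ℝ)..(2 * Real.pi), (deriv g θ) ^ 2)
    ∧ ((∫ θ in (0:ℝ)..(2 * Real.pi), g θ) = 0 →
        (∫ z in {z : ℂ | 0 < ‖z‖ ∧ ‖z‖ < 1}, ‖fderiv ℝ u z‖ ^ 2)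
          ≤ ∫ θ in (0:ℝ)..(2 * Real.pi), (deriv g θ) ^ 2) := by
  have hgp : Function.Periodic g (2 * Real.pi) := hper
  have hg'p : Function.Periodic (deriv g) (2 * Real.pi) := fun x => by
    rw [← deriv_comp_add_const, funext hper]
  have henergy : (∫ z in {z : ℂ | 0 < ‖z‖ ∧ ‖z‖ < 1}, ‖fderiv ℝ u z‖ ^ 2)
      = (1 / 2) * ((∫ θ in (0:ℝ)..(2 * Real.pi), (g θ) ^ 2)
          + ∫ θ in (0:ℝ)..(2 * Real.pi), (deriv g θ) ^ 2) := by
    rw [integral_punctured_disk_of_arg (h := fun θ => g θ ^ 2 + deriv g θ ^ 2)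
      (fun θ => by simp only [hgp θ, hg'p θ])
      (fun z hz hz1 => norm_fderiv_cone_sq (hg.differentiable one_ne_zero) hu hz hz1),
      intervalIntegral.integral_add (f := fun θ => g θ ^ 2) (g := fun θ => deriv g θ ^ 2)
        ((hg.continuous.pow 2).intervalIntegrable _ _)
        (((hg.continuous_deriv le_rfl).pow 2).intervalIntegrable _ _)]
  refine ⟨henergy, fun hmean => ?_⟩
  rw [henergy]
  linarith [integral_sq_le_integral_deriv_sq hg hgp hmean]
end
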